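/- For every nonnegative integer m and all x, t ∈ ℂ, the series Σ_{n=0}^{∞} φ_{n+m}(x) · tⁿ/n! converges absolutely and equals e^{x(e^t−1)} · φ_m(x e^t). -/

import Mathlib

/-- Stirling numbers of the second kind. -/
def stirling2 : ℕ → ℕ → ℕ
  | 0, 0 => 1
  | 0, _ + 1 => 0
  | _ + 1, 0 => 0
  | n + 1, k + 1 => (k + 1) * stirling2 n (k + 1) + stirling2 n k

/-- The exponential polynomials φₙ(x) = Σ_{k=0}^{n} S(n,k) xᵏ. -/
noncomputable def expPoly (n : ℕ) (x : ℂ) : ℂ :=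
  ∑ k ∈ Finset.range (n + 1), (stirling2 n k : ℂ) * x ^ k

/-
Writing `θ p = X * (p + p')`, the recurrence for Stirling numbers says `φₙ₊₁ = θ φₙ`, while the
chain rule says that `t ↦ exp (x (eᵗ - 1)) p(x eᵗ)` has as its derivative the same expression with
`θ p` in place of `p`. Hence the `n`-th derivative of the entire function
`t ↦ exp (x (eᵗ - 1)) φₘ(x eᵗ)` is the same expression with `φₙ₊ₘ`, whose value at `0` is
`φₙ₊ₘ(x)`, and the claim is its Taylor expansion at `0`.
-/

theorem iteratedDeriv_eq_of_forall_hasDerivAt {𝕜 E : Type*} [NontriviallyNormedField 𝕜]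
    [NormedAddCommGroup E] [NormedSpace 𝕜 E] {f : ℕ → 𝕜 → E}
    (hf : ∀ n z, HasDerivAt (f n) (f (n + 1) z) z) (m n : ℕ) :
    iteratedDeriv n (f m) = f (n + m) := by
  induction n with
  | zero => rw [iteratedDeriv_zero, Nat.zero_add]
  | succ n ih =>
    rw [iteratedDeriv_succ, ih, Nat.add_right_comm]
    exact deriv_eq (hf (n + m))

theorem hasSum_taylorSeries_of_forall_hasDerivAt {E : Type*} [NormedAddCommGroup E]
    [NormedSpace ℂ E] [CompleteSpace E] {f : ℕ → ℂ → E}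
    (hf : ∀ n z, HasDerivAt (f n) (f (n + 1) z) z) (m : ℕ) (c z : ℂ) :
    HasSum (fun n : ℕ => (n.factorial : ℂ)⁻¹ • (z - c) ^ n • f (n + m) c) (f m z) := by
  have h_entire : Differentiable ℂ (f m) := fun w => (hf m w).differentiableAt
  simpa only [iteratedDeriv_eq_of_forall_hasDerivAt hf] using
    Complex.hasSum_taylorSeries_of_entire h_entire c z

theorem stirling2_eq_stirlingSecond (n k : ℕ) : stirling2 n k = Nat.stirlingSecond n k := by
  fun_induction stirling2 n k with
  | case1 | case2 | case3 => rfl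
  | case4 n k ih_succ ih => rw [ih_succ, ih, Nat.stirlingSecond_succ_succ]

section ExponentialPolynomial

open Polynomial

variable (R : Type*) [Semiring R]

/-- The exponential (Touchard) polynomial `φₙ` as a formal polynomial over a semiring; `expPoly n`
is the function it defines on `ℂ`. -/
noncomputable def exponentialPolynomial (n : ℕ) : R[X] :=
  ∑ k ∈ Finset.range (n + 1), monomial k (Nat.stirlingSecond n k : R)

theorem coeff_exponentialPolynomial (n k : ℕ) :
    (exponentialPolynomial R n).coeff k = Nat.stirlingSecond n k := by
  simp only [exponentialPolynomial, finsetSum_coeff, coeff_monomial, Finset.sum_ite_eq',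
    Finset.mem_range, ite_eq_left_iff, not_lt]
  intro hnk
  rw [Nat.stirlingSecond_eq_zero_of_lt hnk, Nat.cast_zero]

theorem exponentialPolynomial_succ (n : ℕ) :
    exponentialPolynomial R (n + 1) =
      X * (exponentialPolynomial R n + derivative (exponentialPolynomial R n)) := by
  ext k
  cases k with
  | zero => simp [coeff_exponentialPolynomial]
  | succ k =>
    simp only [coeff_X_mul, coeff_add, coeff_derivative, coeff_exponentialPolynomial]
    rw [Nat.stirlingSecond_succ_succ, add_comm, mul_comm]
    push_cast
    rfl

theorem expPoly_eq_eval (n : ℕ) (x : ℂ) : expPoly n x = (exponentialPolynomial ℂ n).eval x := by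
  simp only [expPoly, exponentialPolynomial, eval_finsetSum, eval_monomial,
    stirling2_eq_stirlingSecond]

theorem hasDerivAt_cexp_mul_eval (p : ℂ[X]) (x t : ℂ) :
    HasDerivAt (fun s => Complex.exp (x * (Complex.exp s - 1)) * p.eval (x * Complex.exp s))
      (Complex.exp (x * (Complex.exp t - 1)) *
        (X * (p + derivative p)).eval (x * Complex.exp t)) t := by
  have h_inner : HasDerivAt (fun s => x * Complex.exp s) (x * Complex.exp t) t :=
    (Complex.hasDerivAt_exp t).const_mul x
  have h_exp : HasDerivAt (fun s => x * (Complex.exp s - 1)) (x * Complex.exp t) t :=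
    ((Complex.hasDerivAt_exp t).sub_const 1).const_mul x
  have h_eval := (p.hasDerivAt (x * Complex.exp t)).comp t h_inner
  refine (h_exp.cexp.mul h_eval).congr_deriv ?_
  simp only [eval_mul, eval_add, eval_X, Function.comp_apply]
  ring

end ExponentialPolynomial

/-- The closed form `exp (x (eᵗ - 1)) φₘ(x eᵗ)` of the exponential generating function of
`n ↦ φₙ₊ₘ(x)`. The index `m` comes before `t` so that differentiation in `t` shifts `m`. -/
noncomputable def expPolyGenFun (x : ℂ) (m : ℕ) (t : ℂ) : ℂ :=
  Complex.exp (x * (Complex.exp t - 1)) * expPoly m (x * Complex.exp t)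

theorem expPolyGenFun_zero_right (x : ℂ) (m : ℕ) : expPolyGenFun x m 0 = expPoly m x := by
  simp [expPolyGenFun]

theorem hasDerivAt_expPolyGenFun (x : ℂ) (m : ℕ) (t : ℂ) :
    HasDerivAt (expPolyGenFun x m) (expPolyGenFun x (m + 1) t) t := by
  unfold expPolyGenFun
  simpa only [expPoly_eq_eval, exponentialPolynomial_succ] using
    hasDerivAt_cexp_mul_eval (exponentialPolynomial ℂ m) x t

theorem stmt3 (m : ℕ) (x t : ℂ) :
    Summable (fun n : ℕ => ‖expPoly (n + m) x * t ^ n / (n.factorial : ℂ)‖) ∧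
    HasSum (fun n : ℕ => expPoly (n + m) x * t ^ n / (n.factorial : ℂ))
      (Complex.exp (x * (Complex.exp t - 1)) * expPoly m (x * Complex.exp t)) := by
  have h_taylor := hasSum_taylorSeries_of_forall_hasDerivAt (hasDerivAt_expPolyGenFun x) m 0 t
  have h_sum : HasSum (fun n : ℕ => expPoly (n + m) x * t ^ n / (n.factorial : ℂ))
      (expPolyGenFun x m t) := by
    refine h_taylor.congr_fun fun n => ?_
    rw [expPolyGenFun_zero_right, sub_zero, smul_eq_mul, smul_eq_mul]
    ring
  exact ⟨h_sum.summable.norm, h_sum⟩
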